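/- arXiv:2002.10704 — 4 statements merged into one kernel-verified Lean document; each statement's English description precedes it below -/
import Mathlib

section
/- (Monotonicity.) Fix a priority order σ, MRF valuations f_1,…,f_n on a finite item set M, an agent p, and sets S ⊆ T ⊆ M. Let A be a non-redundant σ-Lorenz dominating allocation for the profile in which f_p is replaced by the restricted valuation f_{p|S}, and let B be a non-redundant σ-Lorenz dominating allocation for the profile in which f_p is replaced by f_{p|T} (other valuations unchanged in both cases). Then |B_p| ≥ |A_p|; equivalently, f_p(B_p) ≥ f_p(A_p). -/
open Finset
open scoped Classical

variable {n : ℕ} {I : Type*} [DecidableEq I] [Fintype I]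

/-- An allocation assigns pairwise disjoint bundles of items to the agents
(items may remain unallocated). -/
def IsAllocation (A : Fin n → Finset I) : Prop :=
  ∀ i j : Fin n, i ≠ j → Disjoint (A i) (A j)

/-- The vector of utilities of an allocation under a profile of valuations. -/
def util {α : Type*} (f : Fin n → Finset I → α) (A : Fin n → Finset I) : Fin n → α :=
  fun i => f i (A i)

/-- The entries of the vector `u`, sorted in nondecreasing order. -/
noncomputable def sortedVec {α : Type*} [LinearOrder α] (u : Fin n → α) : List α :=
  (Finset.univ.val.map u).sort (· ≤ ·)

/-- `u` Lorenz-dominates `v`: for each `k`, the sum of the `k` smallest entries of `u`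
is at least the sum of the `k` smallest entries of `v`. -/
def LorenzGE {α : Type*} [LinearOrder α] [AddCommMonoid α] (u v : Fin n → α) : Prop :=
  ∀ k : ℕ, ((sortedVec v).take k).sum ≤ ((sortedVec u).take k).sum

/-- A matroid rank function: a normalized submodular valuation with dichotomous marginals. -/
structure IsMRF (f : Finset I → ℕ) : Prop where
  empty : f ∅ = 0
  submod : ∀ S T : Finset I, S ⊆ T → ∀ a : I,
      f (insert a T) + f S ≤ f (insert a S) + f T
  dichot : ∀ (S : Finset I) (a : I), f (insert a S) = f S ∨ f (insert a S) = f S + 1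

/-- Non-redundancy: removing any item from any agent's bundle strictly decreases its value. -/
def NonRedundant (f : Fin n → Finset I → ℕ) (A : Fin n → Finset I) : Prop :=
  ∀ i : Fin n, ∀ a ∈ A i, f i ((A i).erase a) < f i (A i)

/-- A Lorenz dominating allocation. -/
def LorenzDominating (f : Fin n → Finset I → ℕ) (A : Fin n → Finset I) : Prop :=
  ∀ B : Fin n → Finset I, IsAllocation B → LorenzGE (util f A) (util f B)

/-- The σ-perturbed utilities: agent `i` gets `f i (A i) + σ(i)/n²`, where the priority
`σ(i)` ranges over `{1,…,n}`. -/
noncomputable def pUtil (σ : Equiv.Perm (Fin n)) (f : Fin n → Finset I → ℕ)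
    (A : Fin n → Finset I) : Fin n → ℝ :=
  fun i => (f i (A i) : ℝ) + (((σ i : ℕ) : ℝ) + 1) / (n : ℝ) ^ 2

/-- A σ-Lorenz dominating allocation. -/
def SigmaLorenzDom (σ : Equiv.Perm (Fin n)) (f : Fin n → Finset I → ℕ)
    (A : Fin n → Finset I) : Prop :=
  ∀ B : Fin n → Finset I, IsAllocation B → LorenzGE (pUtil σ f A) (pUtil σ f B)

/-- Restriction of a valuation to a subset `D` of the items. -/
def restrictVal (f : Finset I → ℕ) (D : Finset I) : Finset I → ℕ := fun S => f (S ∩ D)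

/-- A partition of all the items into `n` (possibly empty) bundles. -/
def IsPartition (P : Fin n → Finset I) : Prop :=
  (∀ i j : Fin n, i ≠ j → Disjoint (P i) (P j)) ∧ ∀ a : I, ∃ j, a ∈ P j

/-- An XOS valuation: the pointwise maximum of a finite nonempty family of
nonnegative additive valuations. -/
def IsXOS (f : Finset I → ℝ) : Prop :=
  ∃ (k : ℕ) (w : Fin (k + 1) → I → ℝ),
    (∀ t a, 0 ≤ w t a) ∧
    ∀ S : Finset I, f S = Finset.univ.sup' Finset.univ_nonempty (fun t => ∑ a ∈ S, w t a)

/-- A dichotomous valuation (real-valued version). -/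
def IsDichotomousR (f : Finset I → ℝ) : Prop :=
  ∀ (S : Finset I) (a : I), f (insert a S) = f S ∨ f (insert a S) = f S + 1

/-- Envy-freeness up to one good. -/
def EF1 (f : Fin n → Finset I → ℝ) (A : Fin n → Finset I) : Prop :=
  ∀ i j : Fin n, f i (A j) ≤ f i (A i) ∨ ∃ e ∈ A j, f i ((A j).erase e) ≤ f i (A i)

/-- The maximum welfare attainable by a set `S` of agents. -/
noncomputable def maxWelfare (f : Fin n → Finset I → ℕ) (S : Finset (Fin n)) : ℕ :=
  Finset.sup (Finset.univ.filter fun B : Fin n → Finset I => IsAllocation B)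
    (fun B => ∑ j ∈ S, f j (B j))

/-- An allocation extended with index `none` for the set of unallocated items. -/
def extAlloc (A : Fin n → Finset I) : Option (Fin n) → Finset I
  | none => Finset.univ \ Finset.univ.biUnion A
  | some i => A i

/-!
Non-redundant bundles are independent, so values can be replaced by bundle sizes.
If `C` is an allocation with independent bundles and agent `i` holds fewer items in a σ-Lorenz
dominating `A` than in `C`, then matroid augmentation started at `i` walks through the agents,
each one taking an item of its `C`-bundle from the next. It ends at an unallocated item, which
domination forbids, or at an agent `l` who holds more in `A` than in `C`; domination then forces
`l`, after giving up one item, to lie strictly below `i` in perturbed utility.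

Suppose `p` gets fewer items in `B` than in `A`. The allocation `A` remains independent for the
larger report, and so does `B` for the smaller one once the bundle of `p` is emptied. Hence from any
agent whose bundle sizes in `A` and `B` differ, the exchange leads to another such agent with a
strictly smaller perturbed minimum of the two sizes, which is impossible with finitely many agents.
-/

section Lorenz

variable {α : Type*} [AddCommMonoid α] [LinearOrder α]

lemma sum_map_min_le_sum_take_add_nsmul [IsOrderedAddMonoid α] (t : α) (l : List α) (k : ℕ) :
    (l.map (min t)).sum ≤ (l.take k).sum + (l.length - k) • t := by
  have htake : ((l.take k).map (min t)).sum ≤ (l.take k).sum := by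
    simpa using List.sum_le_sum (l := l.take k) fun x _ => min_le_right t x
  have hdrop : ((l.drop k).map (min t)).sum ≤ (l.length - k) • t := by
    have hle : ∀ y ∈ (l.drop k).map (min t), y ≤ t :=
      List.forall_mem_map.2 fun x _ => min_le_left t x
    simpa only [List.length_map, List.length_drop] using List.sum_le_card_nsmul _ t hle
  calc (l.map (min t)).sum
      = ((l.take k).map (min t)).sum + ((l.drop k).map (min t)).sum := by
        rw [← List.sum_append, ← List.map_append, List.take_append_drop]
    _ ≤ (l.take k).sum + (l.length - k) • t := add_le_add htake hdrop

lemma exists_sum_map_min_eq_sum_take_add_nsmul (t : α) {l : List α} (hl : l.Pairwise (· ≤ ·)) :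
    ∃ k, (l.map (min t)).sum = (l.take k).sum + (l.length - k) • t := by
  induction l with
  | nil => exact ⟨0, by simp⟩
  | cons x l ih =>
    obtain ⟨hxl, hl⟩ := List.pairwise_cons.1 hl
    rcases lt_or_ge x t with hx | hx
    · obtain ⟨k, hk⟩ := ih hl
      exact ⟨k + 1, by simp [hk, hx.le, add_assoc]⟩
    · refine ⟨0, ?_⟩
      have hconst : ∀ y ∈ (x :: l).map (min t), y = t := by
        simpa [hx] using fun y hy => hx.trans (hxl y hy)
      simpa using List.sum_eq_card_nsmul _ t hconst

lemma sum_map_sortedVec {β γ : Type*} [LinearOrder β] [AddCommMonoid γ] (g : β → γ)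
    (u : Fin n → β) : ((sortedVec u).map g).sum = ∑ i, g (u i) := by
  rw [← Multiset.sum_coe, ← Multiset.map_coe, sortedVec, Multiset.sort_eq, Multiset.map_map]
  rfl

lemma length_sortedVec {β : Type*} [LinearOrder β] (u : Fin n → β) :
    (sortedVec u).length = n := by
  simp [sortedVec]

lemma LorenzGE.sum_min_le [IsOrderedAddMonoid α] {u v : Fin n → α} (h : LorenzGE u v) (t : α) :
    ∑ i, min t (v i) ≤ ∑ i, min t (u i) := by
  obtain ⟨k, hk⟩ :=
    exists_sum_map_min_eq_sum_take_add_nsmul t (l := sortedVec u) (Multiset.pairwise_sort _ _)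
  rw [sum_map_sortedVec, length_sortedVec] at hk
  calc ∑ i, min t (v i)
      ≤ ((sortedVec v).take k).sum + (n - k) • t := by
        simpa only [sum_map_sortedVec, length_sortedVec] using
          sum_map_min_le_sum_take_add_nsmul t (sortedVec v) k
    _ ≤ ((sortedVec u).take k).sum + (n - k) • t := by gcongr; exact h k
    _ = ∑ i, min t (u i) := hk.symm

lemma not_lorenzGE_of_lt [IsOrderedCancelAddMonoid α] {u v : Fin n → α} {i : Fin n}
    (hi : u i < v i) (h : ∀ j, u j ≤ v j ∨ u i < v j) : ¬ LorenzGE u v := by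
  -- Truncated at the least entry of `v` above `u i`, no entry drops and that of `i` rises.
  obtain ⟨m, hm, hmin⟩ := exists_min_image (univ.filter (u i < v ·)) v ⟨i, by simpa using hi⟩
  simp only [mem_filter, mem_univ, true_and] at hm hmin
  intro hLorenz
  refine (hLorenz.sum_min_le (v m)).not_gt (sum_lt_sum (fun j _ => ?_) ⟨i, mem_univ i, ?_⟩)
  · rcases h j with hj | hj
    · exact min_le_min_left _ hj
    · exact (min_le_left _ _).trans (le_min le_rfl (hmin j hj))
  · exact (min_le_right _ _).trans_lt (lt_min hm hi)

end Lorenz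

section Perturbation

/-- The σ-perturbed utility of agent `i` holding a bundle of value `k`. -/
noncomputable def perturbedValue (σ : Equiv.Perm (Fin n)) (i : Fin n) (k : ℕ) : ℝ :=
  (k : ℝ) + (((σ i : ℕ) : ℝ) + 1) / (n : ℝ) ^ 2

lemma perturbedValue_strictMono (σ : Equiv.Perm (Fin n)) (i : Fin n) :
    StrictMono (perturbedValue σ i) :=
  fun _ _ h => by simpa [perturbedValue] using h

lemma eq_of_perturbedValue_eq {σ : Equiv.Perm (Fin n)} {i j : Fin n} {x y : ℕ}
    (h : perturbedValue σ i x = perturbedValue σ j y) : i = j := by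
  have hn : (n : ℝ) ^ 2 ≠ 0 := by
    have : 0 < n := i.pos
    positivity
  have hscaled : (σ i : ℕ) + n ^ 2 * x = (σ j : ℕ) + n ^ 2 * y := by
    replace h := congrArg ((n : ℝ) ^ 2 * ·) h
    simp only [perturbedValue, mul_add, mul_div_cancel₀ _ hn] at h
    have hnat : n ^ 2 * x + ((σ i : ℕ) + 1) = n ^ 2 * y + ((σ j : ℕ) + 1) := by exact_mod_cast h
    omega
  have hlt (k : Fin n) : (σ k : ℕ) < n ^ 2 :=
    (σ k).isLt.trans_le (Nat.le_self_pow two_ne_zero n)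
  have hmod := congrArg (· % n ^ 2) hscaled
  simp only [Nat.add_mul_mod_self_left, Nat.mod_eq_of_lt (hlt _)] at hmod
  exact σ.injective (Fin.ext hmod)

end Perturbation

section Matroid

variable {α : Type*} [DecidableEq α]

namespace IsMRF

variable {r : Finset α → ℕ}

lemma monotone (hr : IsMRF r) : Monotone r :=
  monotone_iff_forall_le_insert.2 fun X a _ => by
    rcases hr.dichot X a with h | h <;> omega

lemma union_le_add_card (hr : IsMRF r) (X Y : Finset α) : r (X ∪ Y) ≤ r X + #Y := by
  induction Y using Finset.induction_on with
  | empty => simp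
  | insert a Y ha ih =>
    rw [union_insert, card_insert_of_notMem ha]
    rcases hr.dichot (X ∪ Y) a with h | h <;> omega

lemma le_card (hr : IsMRF r) (X : Finset α) : r X ≤ #X := by
  simpa [hr.empty] using hr.union_le_add_card ∅ X

lemma eq_card_of_subset (hr : IsMRF r) {X Y : Finset α} (hX : r X = #X) (hYX : Y ⊆ X) :
    r Y = #Y := by
  have hunion := hr.union_le_add_card Y (X \ Y)
  rw [union_sdiff_of_subset hYX, hX, ← card_sdiff_add_card_eq_card hYX, add_comm] at hunion
  exact (hr.le_card Y).antisymm (le_of_add_le_add_right hunion)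

lemma eq_card_of_forall_erase_lt (hr : IsMRF r) {X : Finset α}
    (hX : ∀ a ∈ X, r (X.erase a) < r X) : r X = #X := by
  suffices h : ∀ Y ⊆ X, r Y = #Y from h X Subset.rfl
  intro Y
  induction Y using Finset.induction_on with
  | empty => simp [hr.empty]
  | insert a Y ha ih =>
    intro hY
    obtain ⟨haX, hYX⟩ := insert_subset_iff.1 hY
    have hmarginal := hr.submod Y (X.erase a) (subset_erase.2 ⟨hYX, ha⟩) a
    rw [insert_erase haX] at hmarginal
    have hlt := hX a haX
    have hcard := ih hYX
    rw [card_insert_of_notMem ha]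
    rcases hr.dichot Y a with h | h <;> omega

lemma union_eq_of_forall_insert_eq (hr : IsMRF r) {X Y : Finset α}
    (h : ∀ y ∈ Y, r (insert y X) = r X) : r (X ∪ Y) = r X := by
  induction Y using Finset.induction_on with
  | empty => simp
  | insert a Y _ ih =>
    rw [union_insert]
    have hmarginal := hr.submod X (X ∪ Y) subset_union_left a
    have hmono := hr.monotone (subset_insert a (X ∪ Y))
    rw [ih fun y hy => h y (mem_insert_of_mem hy)] at hmarginal hmono
    rw [h a (mem_insert_self a Y)] at hmarginal
    omega

lemma exists_insert_eq_card (hr : IsMRF r) {X Y : Finset α} (hX : r X = #X) (hY : r Y = #Y)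
    (hXY : #X < #Y) : ∃ y ∈ Y, y ∉ X ∧ r (insert y X) = #(insert y X) := by
  obtain ⟨y, hyY, hy⟩ : ∃ y ∈ Y, r (insert y X) ≠ r X := by
    by_contra! hcon
    have hunion := hr.union_eq_of_forall_insert_eq hcon
    have hmono := hr.monotone (subset_union_right : Y ⊆ X ∪ Y)
    omega
  have hyX : y ∉ X := fun hyX => hy (by rw [insert_eq_of_mem hyX])
  refine ⟨y, hyY, hyX, ?_⟩
  rw [(hr.dichot X y).resolve_left hy, hX, card_insert_of_notMem hyX]

lemma restrict (hr : IsMRF r) (D : Finset α) : IsMRF (restrictVal r D) where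
  empty := by simp [restrictVal, hr.empty]
  submod X Y hXY a := by
    unfold restrictVal
    by_cases ha : a ∈ D
    · rw [insert_inter_of_mem ha, insert_inter_of_mem ha]
      exact hr.submod _ _ (inter_subset_inter_right hXY) a
    · rw [insert_inter_of_notMem ha, insert_inter_of_notMem ha, add_comm]
  dichot X a := by
    unfold restrictVal
    by_cases ha : a ∈ D
    · rw [insert_inter_of_mem ha]
      exact hr.dichot _ a
    · exact Or.inl (by rw [insert_inter_of_notMem ha])

lemma restrictVal_le (hr : IsMRF r) (D : Finset α) : restrictVal r D ≤ r :=
  fun _ => hr.monotone inter_subset_left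

lemma restrictVal_mono (hr : IsMRF r) : Monotone (restrictVal r) :=
  fun _ _ hDE _ => hr.monotone (inter_subset_inter_left hDE)

end IsMRF

end Matroid

section Exchange

variable {α : Type*} {g h : Fin n → Finset α → ℕ} {A C : Fin n → Finset α}

/-- An allocation in which every bundle is independent in the matroid of its owner, expressed
through the rank function. -/
structure IsIndepAllocation (g : Fin n → Finset α → ℕ) (A : Fin n → Finset α) : Prop where
  isAllocation : IsAllocation A
  eq_card : ∀ i, g i (A i) = #(A i)

lemma IsIndepAllocation.pUtil_eq (hA : IsIndepAllocation g A) (σ : Equiv.Perm (Fin n))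
    (i : Fin n) : pUtil σ g A i = perturbedValue σ i #(A i) := by
  rw [← hA.eq_card i]
  rfl

lemma IsIndepAllocation.update_empty (hA : IsIndepAllocation h A) {p : Fin n} (hp : g p ∅ = 0)
    (hgh : ∀ i ≠ p, g i = h i) : IsIndepAllocation g (Function.update A p ∅) where
  isAllocation i j hij := by
    have hle : Function.update A p ∅ ≤ A := update_le_self_iff.2 (empty_subset _)
    exact (hA.isAllocation i j hij).mono (hle i) (hle j)
  eq_card i := by
    by_cases hi : i = p
    · subst hi
      simpa using hp
    · simpa [hi, hgh i hi] using hA.eq_card i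

/-- The vector of bundle sizes, in which moving an item between agents is the addition of
standard basis vectors. -/
def bundleSizes (A : Fin n → Finset α) : Fin n → ℕ := fun i => #(A i)

variable [DecidableEq α]

lemma NonRedundant.isIndepAllocation (hNR : NonRedundant g A) (hg : ∀ i, IsMRF (g i))
    (hA : IsAllocation A) : IsIndepAllocation g A :=
  ⟨hA, fun i => (hg i).eq_card_of_forall_erase_lt (hNR i)⟩

lemma IsIndepAllocation.mono (hA : IsIndepAllocation g A) (hh : ∀ i, IsMRF (h i)) (hgh : g ≤ h) :
    IsIndepAllocation h A :=
  ⟨hA.isAllocation, fun i =>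
    ((hh i).le_card _).antisymm ((hA.eq_card i).symm.trans_le (hgh i _))⟩

/-- The allocation obtained from `A` by giving item `x` to agent `k`, taking it from its
owner if there is one. -/
def giveItem (A : Fin n → Finset α) (k : Fin n) (x : α) : Fin n → Finset α :=
  Function.update (fun j => (A j).erase x) k (insert x (A k))

lemma giveItem_self (A : Fin n → Finset α) (k : Fin n) (x : α) :
    giveItem A k x k = insert x (A k) :=
  Function.update_self ..

lemma giveItem_of_ne (A : Fin n → Finset α) {j k : Fin n} (hjk : j ≠ k) (x : α) :
    giveItem A k x j = (A j).erase x :=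
  Function.update_of_ne hjk ..

lemma isAllocation_giveItem (hA : IsAllocation A) (k : Fin n) (x : α) :
    IsAllocation (giveItem A k x) := by
  have hk (j : Fin n) (hj : j ≠ k) : Disjoint (insert x (A k)) ((A j).erase x) :=
    disjoint_insert_left.2 ⟨notMem_erase x _, (hA k j hj.symm).mono_right (erase_subset _ _)⟩
  intro i j hij
  by_cases hi : i = k
  · subst hi
    rw [giveItem_self, giveItem_of_ne _ hij.symm]
    exact hk j hij.symm
  · by_cases hj : j = k
    · subst hj
      rw [giveItem_self, giveItem_of_ne _ hi]
      exact (hk i hi).symm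
    · rw [giveItem_of_ne _ hi, giveItem_of_ne _ hj]
      exact (hA i j hij).mono (erase_subset _ _) (erase_subset _ _)

lemma isIndepAllocation_giveItem (hg : ∀ i, IsMRF (g i)) (hA : IsIndepAllocation g A)
    {k : Fin n} {x : α} (hx : g k (insert x (A k)) = #(insert x (A k))) :
    IsIndepAllocation g (giveItem A k x) where
  isAllocation := isAllocation_giveItem hA.isAllocation k x
  eq_card j := by
    by_cases hj : j = k
    · subst hj
      rwa [giveItem_self]
    · rw [giveItem_of_ne _ hj]
      exact (hg j).eq_card_of_subset (hA.eq_card j) (erase_subset _ _)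

lemma bundleSizes_giveItem_of_forall_notMem {x : α} (hx : ∀ j, x ∉ A j) (k : Fin n) :
    bundleSizes (giveItem A k x) = bundleSizes A + Pi.single k 1 := by
  ext j
  by_cases hj : j = k
  · subst hj
    simp [bundleSizes, giveItem_self, hx]
  · simp [bundleSizes, giveItem_of_ne, hj, hx]

lemma bundleSizes_giveItem_of_mem (hA : IsAllocation A) {k l : Fin n} {x : α} (hkl : k ≠ l)
    (hl : x ∈ A l) :
    bundleSizes (giveItem A k x) + Pi.single l 1 = bundleSizes A + Pi.single k 1 := by
  have hx (j : Fin n) (hj : j ≠ l) : x ∉ A j := disjoint_left.1 (hA l j hj.symm) hl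
  ext j
  by_cases hj : j = k
  · subst hj
    simp [bundleSizes, giveItem_self, hx, hkl]
  · by_cases hjl : j = l
    · subst hjl
      simp [bundleSizes, giveItem_of_ne, hj, card_erase_add_one hl]
    · simp [bundleSizes, giveItem_of_ne, hj, hjl, hx]

lemma sum_card_sdiff_giveItem_lt (hC : IsAllocation C) {k : Fin n} {x : α} (hxC : x ∈ C k)
    (hxA : x ∉ A k) : ∑ j, #(C j \ giveItem A k x j) < ∑ j, #(C j \ A j) := by
  refine sum_lt_sum (fun j _ => card_le_card ?_) ⟨k, mem_univ k, card_lt_card ?_⟩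
  · by_cases hj : j = k
    · subst hj
      rw [giveItem_self]
      exact sdiff_subset_sdiff Subset.rfl (subset_insert _ _)
    · have hxj : x ∉ C j := disjoint_left.1 (hC k j (Ne.symm hj)) hxC
      rw [giveItem_of_ne _ hj]
      grind
  · rw [giveItem_self, sdiff_insert]
    exact erase_ssubset (mem_sdiff.2 ⟨hxC, hxA⟩)

lemma IsIndepAllocation.exists_augmentation {A : Fin n → Finset α} (hg : ∀ i, IsMRF (g i))
    (hA : IsIndepAllocation g A) (hC : IsIndepAllocation g C) {i : Fin n}
    (hi : #(A i) < #(C i)) :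
    ∃ A', IsIndepAllocation g A' ∧
      (bundleSizes A' = bundleSizes A + Pi.single i 1 ∨
        ∃ l, #(C l) < #(A l) ∧
          bundleSizes A' + Pi.single l 1 = bundleSizes A + Pi.single i 1) := by
  obtain ⟨x, hxC, hxA, hx⟩ := (hg i).exists_insert_eq_card (hA.eq_card i) (hC.eq_card i) hi
  have hgive := isIndepAllocation_giveItem hg hA hx
  by_cases hown : ∃ l, x ∈ A l
  · obtain ⟨l, hl⟩ := hown
    have hil : i ≠ l := fun hil => hxA (hil ▸ hl)
    have hsizes := bundleSizes_giveItem_of_mem hA.isAllocation hil hl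
    by_cases hCl : #(C l) < #(A l)
    · exact ⟨_, hgive, Or.inr ⟨l, hCl, hsizes⟩⟩
    -- `l` is now one item short of its size in `A`, hence below its size in `C`: continue from `l`.
    have hlt : #(giveItem A i x l) < #(C l) := by
      rw [giveItem_of_ne _ hil.symm]
      exact (card_erase_lt_of_mem hl).trans_le (not_lt.1 hCl)
    have hdecr := sum_card_sdiff_giveItem_lt hC.isAllocation hxC hxA
    obtain ⟨A', hA', hA'sizes | ⟨m, hm, hA'sizes⟩⟩ := exists_augmentation hg hgive hC hlt
    · exact ⟨A', hA', Or.inl (hA'sizes.trans hsizes)⟩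
    · refine ⟨A', hA', Or.inr ⟨m, ?_, hA'sizes.trans hsizes⟩⟩
      have hmi : m ≠ i := by
        rintro rfl
        rw [giveItem_self, card_insert_of_notMem hxA] at hm
        omega
      rw [giveItem_of_ne _ hmi] at hm
      exact hm.trans_le card_erase_le
  · exact ⟨_, hgive, Or.inl (bundleSizes_giveItem_of_forall_notMem (not_exists.1 hown) i)⟩
termination_by ∑ j, #(C j \ A j)

end Exchange

section Monotonicity

variable {α : Type*} [DecidableEq α] {σ : Equiv.Perm (Fin n)} {g h : Fin n → Finset α → ℕ}
  {A B C : Fin n → Finset α} {p : Fin n}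

lemma SigmaLorenzDom.exists_perturbedValue_lt (hLD : SigmaLorenzDom σ g A)
    (hg : ∀ i, IsMRF (g i)) (hA : IsIndepAllocation g A) (hC : IsIndepAllocation g C)
    {i : Fin n} (hi : #(A i) < #(C i)) :
    ∃ l, #(C l) < #(A l) ∧
      ∀ c < #(A l), perturbedValue σ l c < perturbedValue σ i #(A i) := by
  obtain ⟨A', hA', hsizes⟩ := hA.exists_augmentation hg hC hi
  have hle {j : Fin n} (hj : #(A j) ≤ #(A' j)) : pUtil σ g A j ≤ pUtil σ g A' j := by
    rw [hA.pUtil_eq, hA'.pUtil_eq]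
    exact (perturbedValue_strictMono σ j).monotone hj
  have hlt {j : Fin n} (hj : #(A j) < #(A' j)) : pUtil σ g A j < pUtil σ g A' j := by
    rw [hA.pUtil_eq, hA'.pUtil_eq]
    exact perturbedValue_strictMono σ j hj
  simp only [funext_iff, Pi.add_apply, bundleSizes] at hsizes
  obtain hsizes | ⟨l, hl, hsizes⟩ := hsizes
  · exact absurd (hLD A' hA'.isAllocation) <|
      not_lorenzGE_of_lt (i := i) (hlt (by simp [hsizes])) fun j => Or.inl (hle (by simp [hsizes]))
  refine ⟨l, hl, fun c hc => ?_⟩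
  have hil : i ≠ l := by
    rintro rfl
    omega
  have hi' : #(A' i) = #(A i) + 1 := by simpa [hil] using hsizes i
  have hl' : #(A' l) + 1 = #(A l) := by simpa [hil.symm] using hsizes l
  refine ((perturbedValue_strictMono σ l).monotone (by omega : c ≤ #(A' l))).trans_lt ?_
  refine lt_of_le_of_ne (not_lt.1 fun habove => ?_)
    fun heq => hil (eq_of_perturbedValue_eq heq).symm
  refine not_lorenzGE_of_lt (i := i) (hlt (by omega)) (fun j => ?_) (hLD A' hA'.isAllocation)
  by_cases hjl : j = l
  · subst hjl
    right
    rwa [hA.pUtil_eq, hA'.pUtil_eq]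
  · left
    refine hle ?_
    have hj := hsizes j
    rw [Pi.single_eq_of_ne hjl, add_zero] at hj
    exact hj ▸ Nat.le_add_right _ _

lemma card_le_card_of_sigmaLorenzDom (hg : ∀ i, IsMRF (g i)) (hh : ∀ i, IsMRF (h i))
    (hgh : g ≤ h) (heq : ∀ i ≠ p, g i = h i)
    (hA : IsIndepAllocation g A) (hLDA : SigmaLorenzDom σ g A)
    (hB : IsIndepAllocation h B) (hLDB : SigmaLorenzDom σ h B) : #(A p) ≤ #(B p) := by
  by_contra! hp
  let m : Fin n → ℝ := fun i => perturbedValue σ i (min #(A i) #(B i))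
  suffices hdescent : ∀ i, #(A i) ≠ #(B i) → ∃ l, #(A l) ≠ #(B l) ∧ m l < m i by
    obtain ⟨i, hi, hmin⟩ :=
      exists_min_image (univ.filter fun i => #(A i) ≠ #(B i)) m ⟨p, by simpa using hp.ne'⟩
    obtain ⟨l, hl, hlt⟩ := hdescent i (by simpa using hi)
    exact (hmin l (by simpa using hl)).not_gt hlt
  intro i hi
  rcases hi.lt_or_gt with hi | hi
  · have hC : IsIndepAllocation g (Function.update B p ∅) := hB.update_empty (hg p).empty heq
    have hip : i ≠ p := by
      rintro rfl
      omega
    obtain ⟨l, hl, hlt⟩ :=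
      hLDA.exists_perturbedValue_lt hg hA hC (i := i) (by simpa [hip] using hi)
    have hBA : #(B l) < #(A l) := by
      by_cases hlp : l = p
      · rwa [hlp]
      · simpa [hlp] using hl
    exact ⟨l, hBA.ne', by simpa only [m, min_eq_right hBA.le, min_eq_left hi.le] using hlt _ hBA⟩
  · obtain ⟨l, hAB, hlt⟩ := hLDB.exists_perturbedValue_lt hh hB (hA.mono hh hgh) hi
    exact ⟨l, hAB.ne, by simpa only [m, min_eq_left hAB.le, min_eq_right hi.le] using hlt _ hAB⟩

end Monotonicity

theorem PE_monotone_general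
    {n : ℕ} {I : Type*} [DecidableEq I]
    (σ : Equiv.Perm (Fin n))
    (f : Fin n → Finset I → ℕ) (hf : ∀ i, IsMRF (f i))
    (p : Fin n) (r s : Finset I → ℕ) (hr : IsMRF r) (hs : IsMRF s) (hrs : r ≤ s) (hsf : s ≤ f p)
    (A : Fin n → Finset I) (hA : IsAllocation A)
    (hNRA : NonRedundant (Function.update f p r) A)
    (hLDA : SigmaLorenzDom σ (Function.update f p r) A)
    (B : Fin n → Finset I) (hB : IsAllocation B)
    (hNRB : NonRedundant (Function.update f p s) B)
    (hLDB : SigmaLorenzDom σ (Function.update f p s) B) :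
    #(A p) ≤ #(B p) ∧ f p (A p) ≤ f p (B p) := by
  have hMRF (t : Finset I → ℕ) (ht : IsMRF t) (i : Fin n) : IsMRF (Function.update f p t i) :=
    (Function.forall_update_iff f fun _ => IsMRF).2 ⟨ht, fun j _ => hf j⟩ i
  have hAindep := hNRA.isIndepAllocation (hMRF r hr) hA
  have hBindep := hNRB.isIndepAllocation (hMRF s hs) hB
  have hcard : #(A p) ≤ #(B p) :=
    card_le_card_of_sigmaLorenzDom (hMRF r hr) (hMRF s hs)
      (update_le_update_iff.2 ⟨hrs, fun _ _ => le_rfl⟩) (fun i hi => by simp [hi])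
      hAindep hLDA hBindep hLDB
  refine ⟨hcard, ?_⟩
  calc f p (A p) ≤ #(A p) := (hf p).le_card _
    _ ≤ #(B p) := hcard
    _ = s (B p) := by simpa using (hBindep.eq_card p).symm
    _ ≤ f p (B p) := hsf _

/-- Monotonicity of the prioritized egalitarian mechanism: enlarging the restriction set
of agent `p`'s report from `S` to `T ⊇ S` cannot decrease the number of items
(equivalently, the value) that `p` receives. -/
theorem PE_monotone
    {n : ℕ} {I : Type*} [DecidableEq I] [Fintype I]
    (σ : Equiv.Perm (Fin n))
    (f : Fin n → Finset I → ℕ) (hf : ∀ i, IsMRF (f i))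
    (p : Fin n) (S T : Finset I) (hST : S ⊆ T)
    (A : Fin n → Finset I) (hA : IsAllocation A)
    (hNRA : NonRedundant (Function.update f p (restrictVal (f p) S)) A)
    (hLDA : SigmaLorenzDom σ (Function.update f p (restrictVal (f p) S)) A)
    (B : Fin n → Finset I) (hB : IsAllocation B)
    (hNRB : NonRedundant (Function.update f p (restrictVal (f p) T)) B)
    (hLDB : SigmaLorenzDom σ (Function.update f p (restrictVal (f p) T)) B) :
    (A p).card ≤ (B p).card ∧ f p (A p) ≤ f p (B p) :=
  PE_monotone_general σ f hf p _ _ ((hf p).restrict S) ((hf p).restrict T)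
    ((hf p).restrictVal_mono hST) ((hf p).restrictVal_le T) A hA hNRA hLDA B hB hNRB hLDB
end

section
/- Let 0 < ε < 1/3 and let M be a set of three items. There is no deterministic allocation mechanism Mech, mapping each pair (f_1, f_2) of ε-leveled valuations on M to an allocation, satisfying all of the following: (i) Mech is truthful: for every agent i ∈ {1,2}, every pair (f_1,f_2) of ε-leveled valuations, and every ε-leveled deviation f'_i, agent i's true value for her bundle under the profile with f'_i replacing f_i is at most her true value for her bundle under (f_1,f_2); (ii) for every pair of reports, the welfare of the output allocation is at least 1/(1+ε) times the maximum welfare over all allocations; and (iii) for every pair of reports, every agent whose demand set has size exactly two receives at least one item from her demand set. -/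
open Finset
open scoped Classical

variable {n : ℕ} {I : Type*} [DecidableEq I] [Fintype I]

/-- An ε-leveled valuation on the items, given by its vector of item values:
each item is worth either 0 or some value in `[1, 1+ε]`, and values are additive. -/
def EpsLeveled (ε : ℝ) {m : ℕ} (w : Fin m → ℝ) : Prop :=
  ∀ a : Fin m, w a = 0 ∨ (1 ≤ w a ∧ w a ≤ 1 + ε)

/-! Write `1_S` for the valuation that is `1` on each item of `S` and `0` elsewhere. Fix three
items `T` and suppose two agents report `1_T`. By (ii) they share all of `T`, as two items are too
few when `2 (1 + ε) < 3`. So one of them, `j`, gets two items `D ⊆ T`. By truthfulness `j` would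
also get all of `D` by reporting `1_D`, and this is impossible:

* at `(1_D, 1_D)` the other agent `i` gets an item of `D`, by (iii);
* so at `(1_T + ε 1_D, 1_D)` agent `i` gets value at least `1 + ε`, and then two items of `T`,
  since welfare at most `(1 + ε) + 1` is too little against the `3 + 2ε` of giving her all of `T`;
* so at `(1_T, 1_D)` agent `i` gets two items of `T`, one of which lies in `D`. -/

variable {m : ℕ} {ε : ℝ}

theorem card_inter_add_card_inter_le {α : Type*} [DecidableEq α] {A B : Finset α}
    (hAB : Disjoint A B) (S : Finset α) : #(A ∩ S) + #(B ∩ S) ≤ #S := by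
  rw [← Finset.card_union_of_disjoint
    (hAB.mono Finset.inter_subset_left Finset.inter_subset_left)]
  exact Finset.card_le_card (Finset.union_subset Finset.inter_subset_right
    Finset.inter_subset_right)

/-- The valuation `1_S` of an agent who values each item of `S` at `1` and no other item. -/
noncomputable def unitVal (S : Finset (Fin m)) : Fin m → ℝ :=
  (S : Set (Fin m)).indicator 1

theorem unitVal_ne_zero_iff {S : Finset (Fin m)} {a : Fin m} : unitVal S a ≠ 0 ↔ a ∈ S := by
  simp [unitVal]

theorem sum_unitVal (A S : Finset (Fin m)) : ∑ a ∈ A, unitVal S a = #(A ∩ S) := by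
  simp [unitVal, Set.indicator_apply]

theorem sum_unitVal_add_smul (A T D : Finset (Fin m)) :
    ∑ a ∈ A, (unitVal T + ε • unitVal D) a = #(A ∩ T) + ε * #(A ∩ D) := by
  simp [Finset.sum_add_distrib, ← Finset.mul_sum, sum_unitVal]

theorem epsLeveled_zero : EpsLeveled ε (0 : Fin m → ℝ) :=
  fun _ => Or.inl rfl

theorem epsLeveled_unitVal_add_smul (hε : 0 ≤ ε) {T D : Finset (Fin m)} (hDT : D ⊆ T) :
    EpsLeveled ε (unitVal T + ε • unitVal D) := by
  intro a
  by_cases haT : a ∈ T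
  · by_cases haD : a ∈ D <;> simp [unitVal, haT, haD, hε]
  · have haD : a ∉ D := fun h => haT (hDT h)
    simp [unitVal, haT, haD]

theorem epsLeveled_unitVal (hε : 0 ≤ ε) (S : Finset (Fin m)) : EpsLeveled ε (unitVal S) := by
  intro a
  by_cases ha : a ∈ S <;> simp [unitVal, ha, hε]

/-- The profile in which agents `i ≠ j` report `u` and `v`, and all others report `0`. -/
def pairProfile (i j : Fin n) (u v : Fin m → ℝ) : Fin n → Fin m → ℝ :=
  Pi.single i u + Pi.single j v

section PairProfile

variable {i j : Fin n} {u v : Fin m → ℝ}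

theorem pairProfile_comm : pairProfile i j u v = pairProfile j i v u :=
  add_comm _ _

theorem pairProfile_left (hij : i ≠ j) : pairProfile i j u v i = u := by
  simp [pairProfile, hij]

theorem pairProfile_right (hij : i ≠ j) : pairProfile i j u v j = v := by
  simp [pairProfile, hij.symm]

theorem pairProfile_of_ne {k : Fin n} (hki : k ≠ i) (hkj : k ≠ j) :
    pairProfile i j u v k = 0 := by
  simp [pairProfile, hki, hkj]

theorem update_pairProfile_left (hij : i ≠ j) (u' : Fin m → ℝ) :
    Function.update (pairProfile i j u v) i u' = pairProfile i j u' v := by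
  funext k
  rcases eq_or_ne k i with rfl | hki
  · rw [Function.update_self, pairProfile_left hij]
  · simp [pairProfile, hki]

theorem epsLeveled_pairProfile (hij : i ≠ j) (hu : EpsLeveled ε u) (hv : EpsLeveled ε v)
    (k : Fin n) : EpsLeveled ε (pairProfile i j u v k) := by
  rcases eq_or_ne k i with rfl | hki
  · rwa [pairProfile_left hij]
  rcases eq_or_ne k j with rfl | hkj
  · rwa [pairProfile_right hij]
  · rw [pairProfile_of_ne hki hkj]
    exact epsLeveled_zero

theorem welfare_pairProfile (hij : i ≠ j) (A : Fin n → Finset (Fin m)) :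
    ∑ k, ∑ a ∈ A k, pairProfile i j u v k a = ∑ a ∈ A i, u a + ∑ a ∈ A j, v a := by
  rw [Fintype.sum_eq_add i j hij fun k hk => by simp [pairProfile_of_ne hk.1 hk.2],
    pairProfile_left hij, pairProfile_right hij]

end PairProfile

theorem isAllocation_single (i : Fin n) (S : Finset (Fin m)) :
    IsAllocation (Function.update (fun _ => ∅) i S) := by
  intro k l hkl
  rcases eq_or_ne k i with rfl | hki
  · simp [Function.update_of_ne hkl.symm]
  · simp [Function.update_of_ne hki]

/-- A mechanism for `n` agents and `m` items that, on ε-leveled reports, outputs allocations, is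
truthful, obtains a `1 / (1 + ε)` fraction of the maximum welfare, and gives every agent who
demands exactly two items at least one of them. -/
structure IsTruthfulFair (ε : ℝ) (Mech : (Fin n → Fin m → ℝ) → Fin n → Finset (Fin m)) :
    Prop where
  isAllocation : ∀ F : Fin n → Fin m → ℝ, (∀ i, EpsLeveled ε (F i)) → IsAllocation (Mech F)
  truthful : ∀ F : Fin n → Fin m → ℝ, (∀ j, EpsLeveled ε (F j)) →
    ∀ i : Fin n, ∀ w' : Fin m → ℝ, EpsLeveled ε w' →
      ∑ a ∈ Mech (Function.update F i w') i, F i a ≤ ∑ a ∈ Mech F i, F i a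
  welfare : ∀ F : Fin n → Fin m → ℝ, (∀ j, EpsLeveled ε (F j)) →
    ∀ B : Fin n → Finset (Fin m), IsAllocation B →
      ∑ i, ∑ a ∈ B i, F i a ≤ (1 + ε) * ∑ i, ∑ a ∈ Mech F i, F i a
  fair : ∀ F : Fin n → Fin m → ℝ, (∀ j, EpsLeveled ε (F j)) →
    ∀ i : Fin n, (Finset.univ.filter fun a => F i a ≠ 0).card = 2 → ∃ a ∈ Mech F i, F i a ≠ 0

namespace IsTruthfulFair

variable {Mech : (Fin n → Fin m → ℝ) → Fin n → Finset (Fin m)} {i j : Fin n}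

section PairProfile

variable {u v : Fin m → ℝ}

theorem disjoint_pair (h : IsTruthfulFair ε Mech) (hij : i ≠ j) (hu : EpsLeveled ε u)
    (hv : EpsLeveled ε v) :
    Disjoint (Mech (pairProfile i j u v) i) (Mech (pairProfile i j u v) j) :=
  h.isAllocation _ (epsLeveled_pairProfile hij hu hv) i j hij

theorem truthful_left (h : IsTruthfulFair ε Mech) (hij : i ≠ j) (hu : EpsLeveled ε u)
    (hv : EpsLeveled ε v) {u' : Fin m → ℝ} (hu' : EpsLeveled ε u') :
    ∑ a ∈ Mech (pairProfile i j u' v) i, u a ≤ ∑ a ∈ Mech (pairProfile i j u v) i, u a := by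
  simpa only [update_pairProfile_left hij, pairProfile_left hij] using
    h.truthful _ (epsLeveled_pairProfile hij hu hv) i u' hu'

theorem truthful_right (h : IsTruthfulFair ε Mech) (hij : i ≠ j) (hu : EpsLeveled ε u)
    (hv : EpsLeveled ε v) {v' : Fin m → ℝ} (hv' : EpsLeveled ε v') :
    ∑ a ∈ Mech (pairProfile i j u v') j, v a ≤ ∑ a ∈ Mech (pairProfile i j u v) j, v a := by
  simpa only [pairProfile_comm (i := j)] using h.truthful_left hij.symm hv hu hv'

theorem sum_le_welfare_pair (h : IsTruthfulFair ε Mech) (hij : i ≠ j) (hu : EpsLeveled ε u)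
    (hv : EpsLeveled ε v) (S : Finset (Fin m)) :
    ∑ a ∈ S, u a ≤ (1 + ε) * (∑ a ∈ Mech (pairProfile i j u v) i, u a +
      ∑ a ∈ Mech (pairProfile i j u v) j, v a) := by
  have hwelfare :=
    h.welfare _ (epsLeveled_pairProfile hij hu hv) _ (isAllocation_single i S)
  simpa only [welfare_pairProfile hij, Function.update_self, Function.update_of_ne hij.symm,
    Finset.sum_empty, add_zero] using hwelfare

end PairProfile

variable {T D : Finset (Fin m)}

theorem inter_nonempty_of_unitVal (h : IsTruthfulFair ε Mech) (hε0 : 0 ≤ ε) (hij : i ≠ j)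
    (hD : #D = 2) {v : Fin m → ℝ} (hv : EpsLeveled ε v) :
    (Mech (pairProfile i j (unitVal D) v) i ∩ D).Nonempty := by
  have hfair :=
    h.fair _ (epsLeveled_pairProfile hij (epsLeveled_unitVal hε0 D) hv) i
  simp only [pairProfile_left hij, unitVal_ne_zero_iff, Finset.filter_univ_mem] at hfair
  obtain ⟨a, haA, haD⟩ := hfair hD
  exact ⟨a, Finset.mem_inter.2 ⟨haA, haD⟩⟩

theorem one_add_le_value_of_unitVal_add_smul (h : IsTruthfulFair ε Mech) (hε0 : 0 ≤ ε)
    (hij : i ≠ j) (hDT : D ⊆ T) (hD : #D = 2) {v : Fin m → ℝ} (hv : EpsLeveled ε v) :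
    1 + ε ≤ ∑ a ∈ Mech (pairProfile i j (unitVal T + ε • unitVal D) v) i,
      (unitVal T + ε • unitVal D) a := by
  set A := Mech (pairProfile i j (unitVal D) v) i
  have hAD : 1 ≤ #(A ∩ D) := (h.inter_nonempty_of_unitVal hε0 hij hD hv).card_pos
  have hAT : 1 ≤ #(A ∩ T) := hAD.trans (Finset.card_le_card (Finset.inter_subset_inter_left hDT))
  calc 1 + ε ≤ #(A ∩ T) + ε * #(A ∩ D) :=
        add_le_add (mod_cast hAT) (le_mul_of_one_le_right hε0 (mod_cast hAD))
    _ = ∑ a ∈ A, (unitVal T + ε • unitVal D) a := (sum_unitVal_add_smul A T D).symm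
    _ ≤ _ := h.truthful_left hij (epsLeveled_unitVal_add_smul hε0 hDT) hv
      (epsLeveled_unitVal hε0 D)

theorem two_le_card_inter_of_unitVal_add_smul (h : IsTruthfulFair ε Mech) (hε0 : 0 < ε)
    (hε : ε < 1 / 2) (hij : i ≠ j) (hDT : D ⊆ T) (hT : #T = 3) (hD : #D = 2) :
    2 ≤ #(Mech (pairProfile i j (unitVal T + ε • unitVal D) (unitVal D)) i ∩ T) := by
  have hu := epsLeveled_unitVal_add_smul hε0.le hDT
  have hv := epsLeveled_unitVal hε0.le D
  have hvalue := h.one_add_le_value_of_unitVal_add_smul hε0.le hij hDT hD hv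
  have hwelfare := h.sum_le_welfare_pair hij hu hv T
  have hdisj := h.disjoint_pair hij hu hv
  set A := Mech (pairProfile i j (unitVal T + ε • unitVal D) (unitVal D)) i
  set B := Mech (pairProfile i j (unitVal T + ε • unitVal D) (unitVal D)) j
  rw [sum_unitVal_add_smul] at hvalue
  rw [sum_unitVal_add_smul, sum_unitVal_add_smul, sum_unitVal, Finset.inter_self,
    Finset.inter_eq_right.2 hDT, hT, hD] at hwelfare
  by_contra! hlt
  have hAT : (#(A ∩ T) : ℝ) ≤ 1 := mod_cast Nat.le_of_lt_succ hlt
  have hADT : #(A ∩ D) ≤ #(A ∩ T) := Finset.card_le_card (Finset.inter_subset_inter_left hDT)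
  have hAD : #(A ∩ D) = 1 := by
    have hne : #(A ∩ D) ≠ 0 := fun h0 => by
      rw [h0] at hvalue
      push_cast at hvalue
      linarith
    omega
  have hBD : (#(B ∩ D) : ℝ) ≤ 1 := by
    have hsum := card_inter_add_card_inter_le hdisj D
    exact_mod_cast show #(B ∩ D) ≤ 1 by omega
  have hbound : 3 + ε * 2 ≤ (1 + ε) * (1 + ε + 1) :=
    calc 3 + ε * 2 ≤ (1 + ε) * (#(A ∩ T) + ε * #(A ∩ D) + #(B ∩ D)) := by exact_mod_cast hwelfare
      _ ≤ (1 + ε) * (1 + ε + 1) := by rw [hAD, Nat.cast_one, mul_one]; gcongr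
  nlinarith

theorem two_le_card_inter_of_unitVal (h : IsTruthfulFair ε Mech) (hε0 : 0 < ε) (hε : ε < 1 / 2)
    (hij : i ≠ j) (hDT : D ⊆ T) (hT : #T = 3) (hD : #D = 2) :
    2 ≤ #(Mech (pairProfile i j (unitVal T) (unitVal D)) i ∩ T) := by
  have htruth := h.truthful_left hij (epsLeveled_unitVal hε0.le T) (epsLeveled_unitVal hε0.le D)
    (epsLeveled_unitVal_add_smul hε0.le hDT)
  simp only [sum_unitVal, Nat.cast_le] at htruth
  exact (h.two_le_card_inter_of_unitVal_add_smul hε0 hε hij hDT hT hD).trans htruth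

theorem not_subset_right_of_unitVal (h : IsTruthfulFair ε Mech) (hε0 : 0 < ε) (hε : ε < 1 / 2)
    (hij : i ≠ j) (hDT : D ⊆ T) (hT : #T = 3) (hD : #D = 2) :
    ¬ D ⊆ Mech (pairProfile i j (unitVal T) (unitVal D)) j := by
  intro hDB
  have hdisj := h.disjoint_pair hij (epsLeveled_unitVal hε0.le T) (epsLeveled_unitVal hε0.le D)
  have hcard := h.two_le_card_inter_of_unitVal hε0 hε hij hDT hT hD
  have hDBT := Finset.card_le_card (Finset.subset_inter hDB hDT)
  have hsum := card_inter_add_card_inter_le hdisj T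
  omega

theorem card_inter_lt_two_of_unitVal (h : IsTruthfulFair ε Mech) (hε0 : 0 < ε) (hε : ε < 1 / 2)
    (hij : i ≠ j) (hT : #T = 3) :
    #(Mech (pairProfile i j (unitVal T) (unitVal T)) j ∩ T) < 2 := by
  by_contra! hcard
  obtain ⟨D, hDB, hD⟩ := Finset.exists_subset_card_eq hcard
  obtain ⟨hDA, hDT⟩ := Finset.subset_inter_iff.1 hDB
  have htruth := h.truthful_right hij (epsLeveled_unitVal hε0.le T) (epsLeveled_unitVal hε0.le D)
    (epsLeveled_unitVal hε0.le T)
  rw [sum_unitVal, sum_unitVal, Finset.inter_eq_right.2 hDA, Nat.cast_le] at htruth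
  exact h.not_subset_right_of_unitVal hε0 hε hij hDT hT hD
    (Finset.inter_eq_right.1 (Finset.eq_of_subset_of_card_le Finset.inter_subset_right htruth))

theorem three_le_card_inter_add_card_inter (h : IsTruthfulFair ε Mech) (hε0 : 0 ≤ ε)
    (hε : ε < 1 / 2) (hij : i ≠ j) (hT : #T = 3) :
    3 ≤ #(Mech (pairProfile i j (unitVal T) (unitVal T)) i ∩ T) +
      #(Mech (pairProfile i j (unitVal T) (unitVal T)) j ∩ T) := by
  have hT' := epsLeveled_unitVal hε0 T
  have hwelfare := h.sum_le_welfare_pair hij hT' hT' T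
  simp only [sum_unitVal, Finset.inter_self, hT] at hwelfare
  by_contra! hlt
  have hle : (#(Mech (pairProfile i j (unitVal T) (unitVal T)) i ∩ T) : ℝ) +
      #(Mech (pairProfile i j (unitVal T) (unitVal T)) j ∩ T) ≤ 2 := mod_cast Nat.le_of_lt_succ hlt
  push_cast at hwelfare
  nlinarith

end IsTruthfulFair

theorem no_deterministic_truthful_fair_leveled_general {n m : ℕ} (hn : 2 ≤ n) (hm : 3 ≤ m) {ε : ℝ}
    (hε0 : 0 < ε) (hε : ε < 1 / 2) :
    ¬ ∃ Mech : (Fin n → Fin m → ℝ) → Fin n → Finset (Fin m), IsTruthfulFair ε Mech := by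
  rintro ⟨Mech, h⟩
  have := Fin.nontrivial_iff_two_le.2 hn
  obtain ⟨i, j, hij⟩ := exists_pair_ne (Fin n)
  obtain ⟨T, -, hT⟩ : ∃ T ⊆ (Finset.univ : Finset (Fin m)), #T = 3 :=
    Finset.exists_subset_card_eq (by simpa using hm)
  have hsum := h.three_le_card_inter_add_card_inter hε0.le hε hij hT
  have hj := h.card_inter_lt_two_of_unitVal hε0 hε hij hT
  have hi := h.card_inter_lt_two_of_unitVal hε0 hε hij.symm hT
  rw [pairProfile_comm] at hi
  omega

/-- There is no deterministic truthful allocation mechanism for two ε-leveled agents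
and three items that always obtains a `1/(1+ε)` fraction of the maximum welfare and
gives every agent who demands exactly two items at least one of them. -/
theorem no_deterministic_truthful_fair_leveled (ε : ℝ) (hε0 : 0 < ε) (hε : ε < 1 / 3) :
    ¬ ∃ Mech : (Fin 2 → Fin 3 → ℝ) → (Fin 2 → Finset (Fin 3)),
      -- the mechanism outputs allocations
      (∀ F : Fin 2 → Fin 3 → ℝ, (∀ i, EpsLeveled ε (F i)) →
        IsAllocation (Mech F)) ∧
      -- (i) truthfulness
      (∀ F : Fin 2 → Fin 3 → ℝ, (∀ j, EpsLeveled ε (F j)) →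
        ∀ i : Fin 2, ∀ w' : Fin 3 → ℝ, EpsLeveled ε w' →
          ∑ a ∈ Mech (Function.update F i w') i, F i a ≤ ∑ a ∈ Mech F i, F i a) ∧
      -- (ii) welfare at least a 1/(1+ε) fraction of the maximum welfare
      (∀ F : Fin 2 → Fin 3 → ℝ, (∀ j, EpsLeveled ε (F j)) →
        ∀ B : Fin 2 → Finset (Fin 3), IsAllocation B →
          ∑ i, ∑ a ∈ B i, F i a ≤ (1 + ε) * ∑ i, ∑ a ∈ Mech F i, F i a) ∧
      -- (iii) an agent whose demand set has size two gets at least one demanded item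
      (∀ F : Fin 2 → Fin 3 → ℝ, (∀ j, EpsLeveled ε (F j)) →
        ∀ i : Fin 2, (Finset.univ.filter fun a => F i a ≠ 0).card = 2 →
          ∃ a ∈ Mech F i, F i a ≠ 0) := by
  rintro ⟨Mech, isAllocation, truthful, welfare, fair⟩
  exact no_deterministic_truthful_fair_leveled_general le_rfl le_rfl hε0 (by linarith)
    ⟨Mech, isAllocation, truthful, welfare, fair⟩
end

section
/- For every real number c with √3 − 1 < c ≤ 1 there exists a finite set M of items such that there is no deterministic truthful allocation mechanism for two agents with dichotomous XOS valuations on M whose output allocation always has welfare at least c times the maximum welfare over all allocations. -/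
open Finset
open scoped Classical

variable {n : ℕ} {I : Type*} [DecidableEq I] [Fintype I]

/-!
Suppose both agents value only the items of `X`, with `#X = x`. A `c`-approximate mechanism hands
some agent `i` a set `A` of at least `c * x / 2` of them. Let `i` now report instead that it wants
the larger part of `A` or of `T`, where `T` is disjoint from `X` and `#T = #A - 1`. By truthfulness
`i` still receives all of `A`, so the welfare is at most `#A + (x - #A) = x`, although giving `T` to
`i` and `X` to the other agent yields `#A - 1 + x`. Hence `c * (c * x / 2 + x - 1) ≤ x`, which for
large `x` forces `c ^ 2 + 2 * c ≤ 2`, that is, `c ≤ √3 - 1`.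
-/

section Valuations

variable {ι : Type*} [DecidableEq ι] {𝒜 : Finset (Finset ι)} {A P Q S T X : Finset ι}

/-- The valuation of an agent that wants to hold as much as possible of a single member of the
family `𝒜` of target sets. It takes the value `0` if `𝒜` is empty. -/
def maxInterCard (𝒜 : Finset (Finset ι)) (S : Finset ι) : ℝ :=
  (𝒜.sup fun A => #(S ∩ A) : ℕ)

theorem maxInterCard_singleton : maxInterCard {A} S = #(S ∩ A) := by
  simp only [maxInterCard, sup_singleton]

theorem maxInterCard_pair : maxInterCard {A, T} S = max #(S ∩ A) #(S ∩ T) := by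
  simp only [maxInterCard, sup_insert, sup_singleton]

theorem isXOS_maxInterCard (h𝒜 : 𝒜.Nonempty) : IsXOS (maxInterCard 𝒜) := by
  obtain ⟨k, hk⟩ := Nat.exists_eq_succ_of_ne_zero h𝒜.card_ne_zero
  let e := 𝒜.equivFinOfCardEq hk
  refine ⟨k, fun t a => if a ∈ (e.symm t).1 then 1 else 0, fun t a => by positivity, fun S => ?_⟩
  simp only [sum_boole, filter_mem_eq_inter]
  refine le_antisymm ?_ (sup'_le _ _ fun t _ => ?_)
  · obtain ⟨A, hA, hmax⟩ := 𝒜.exists_mem_eq_sup h𝒜 fun A => #(S ∩ A)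
    rw [maxInterCard, hmax]
    exact le_sup'_of_le _ (mem_univ (e ⟨A, hA⟩)) (by rw [e.symm_apply_apply])
  · exact Nat.cast_le.mpr (le_sup (f := fun A => #(S ∩ A)) (e.symm t).2)

theorem isDichotomousR_maxInterCard (𝒜 : Finset (Finset ι)) :
    IsDichotomousR (maxInterCard 𝒜) := by
  intro S a
  have lower : (𝒜.sup fun A => #(S ∩ A)) ≤ 𝒜.sup fun A => #(insert a S ∩ A) :=
    sup_mono_fun fun A _ => card_le_card (inter_subset_inter_right (subset_insert a S))
  have upper : (𝒜.sup fun A => #(insert a S ∩ A)) ≤ (𝒜.sup fun A => #(S ∩ A)) + 1 := by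
    refine Finset.sup_le fun A hA => ?_
    calc #(insert a S ∩ A) ≤ #(insert a (S ∩ A)) := card_le_card (by grind)
      _ ≤ #(S ∩ A) + 1 := card_insert_le a (S ∩ A)
      _ ≤ (𝒜.sup fun A => #(S ∩ A)) + 1 :=
        Nat.add_le_add_right (le_sup (f := fun A => #(S ∩ A)) hA) 1
  simp only [maxInterCard]
  norm_cast
  lia

theorem subset_of_card_le_maxInterCard_pair (hTA : #T < #A) (hS : #A ≤ maxInterCard {A, T} S) :
    A ⊆ S := by
  rw [maxInterCard_pair, Nat.cast_le, le_max_iff] at hS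
  have hST : #(S ∩ T) ≤ #T := card_le_card inter_subset_right
  have hSA : #A ≤ #(S ∩ A) := hS.resolve_right (by lia)
  exact inter_eq_right.mp (eq_of_subset_of_card_le inter_subset_right hSA)

theorem maxInterCard_pair_add_card_inter_le (hPQ : Disjoint P Q) (hAP : A ⊆ P) (hAX : A ⊆ X)
    (hTA : #T ≤ #A) : maxInterCard {A, T} P + #(Q ∩ X) ≤ #X := by
  have hP : maxInterCard {A, T} P ≤ #A := by
    rw [maxInterCard_pair]
    exact mod_cast max_le (card_le_card inter_subset_right)
      ((card_le_card inter_subset_right).trans hTA)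
  have hcard : #A + #(Q ∩ X) ≤ #X := by
    rw [← card_union_of_disjoint (hPQ.mono hAP inter_subset_left)]
    exact card_le_card (union_subset hAX inter_subset_right)
  calc maxInterCard {A, T} P + #(Q ∩ X) ≤ #A + #(Q ∩ X) := by gcongr
    _ ≤ #X := mod_cast hcard

end Valuations

section Mechanisms

variable {ι : Type*} {𝒱 : Set (Finset ι → ℝ)} {c : ℝ}
  {M : (Fin n → Finset ι → ℝ) → Fin n → Finset ι}

/-- The mechanism `M` outputs an allocation whenever all reported valuations lie in `𝒱`. -/
def IsFeasibleOn (𝒱 : Set (Finset ι → ℝ)) (M : (Fin n → Finset ι → ℝ) → Fin n → Finset ι) :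
    Prop :=
  ∀ F : Fin n → Finset ι → ℝ, (∀ i, F i ∈ 𝒱) → IsAllocation (M F)

/-- No agent with a valuation in `𝒱` gains by misreporting another valuation in `𝒱`. -/
def IsTruthfulOn (𝒱 : Set (Finset ι → ℝ)) (M : (Fin n → Finset ι → ℝ) → Fin n → Finset ι) :
    Prop :=
  ∀ F : Fin n → Finset ι → ℝ, (∀ i, F i ∈ 𝒱) → ∀ i, ∀ f' ∈ 𝒱,
    F i (M (Function.update F i f') i) ≤ F i (M F i)

/-- On reports in `𝒱`, the welfare of the output of `M` is at least `c` times that of every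
allocation. -/
def IsApproxOn (𝒱 : Set (Finset ι → ℝ)) (c : ℝ)
    (M : (Fin n → Finset ι → ℝ) → Fin n → Finset ι) : Prop :=
  ∀ F : Fin n → Finset ι → ℝ, (∀ i, F i ∈ 𝒱) →
    ∀ B : Fin n → Finset ι, IsAllocation B → c * ∑ i, F i (B i) ≤ ∑ i, F i (M F i)

theorem isAllocation_update_empty (i : Fin n) (X : Finset ι) :
    IsAllocation (Function.update (fun _ => ∅) i X) := by
  intro j l hjl
  by_cases hj : j = i
  · simp [Function.update_of_ne (hj ▸ hjl.symm)]
  · simp [Function.update_of_ne hj]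

theorem isAllocation_update_of_disjoint {T X : Finset ι} (hXT : Disjoint X T) (i : Fin 2) :
    IsAllocation (Function.update (fun _ => X) i T) := by
  intro j l hjl
  rcases (by lia : j = i ∧ l ≠ i ∨ j ≠ i ∧ l = i) with ⟨rfl, hl⟩ | ⟨hj, rfl⟩
  · simpa [Function.update_of_ne hl] using hXT.symm
  · simpa [Function.update_of_ne hj] using hXT

variable [DecidableEq ι] {A T X : Finset ι}

theorem IsApproxOn.exists_mul_card_le [NeZero n] (hM : IsApproxOn 𝒱 c M)
    (hX : maxInterCard {X} ∈ 𝒱) :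
    ∃ i, c * #X ≤ n * #(M (fun _ => maxInterCard {X}) i ∩ X) := by
  have happrox := hM _ (fun _ => hX) _ (isAllocation_update_empty 0 X)
  simp only [maxInterCard_singleton] at happrox
  rw [Fintype.sum_eq_single 0 fun i hi => by simp [Function.update_of_ne hi],
    Function.update_self, inter_self] at happrox
  obtain ⟨i, -, hi⟩ := exists_le_of_sum_le (s := univ) (f := fun _ : Fin n => c * #X)
    (g := fun i => n * (#(M (fun _ => maxInterCard {X}) i ∩ X) : ℝ)) univ_nonempty (by
      rw [sum_const, card_univ, Fintype.card_fin, nsmul_eq_mul, ← mul_sum]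
      gcongr)
  exact ⟨i, hi⟩

theorem IsTruthfulOn.subset_update_maxInterCard_pair (hM : IsTruthfulOn 𝒱 M)
    {F : Fin n → Finset ι → ℝ} (hF : ∀ i, F i ∈ 𝒱) {i : Fin n} (hAT : maxInterCard {A, T} ∈ 𝒱)
    (hA : A ⊆ M F i) (hTA : #T < #A) :
    A ⊆ M (Function.update F i (maxInterCard {A, T})) i := by
  set G := Function.update F i (maxInterCard {A, T}) with hG_def
  have hG : ∀ l, G l ∈ 𝒱 :=
    (Function.forall_update_iff F fun _ f => f ∈ 𝒱).mpr ⟨hAT, fun l _ => hF l⟩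
  have hGi : G i = maxInterCard {A, T} := Function.update_self ..
  have hback : Function.update G i (F i) = F := by
    rw [hG_def, Function.update_idem, Function.update_eq_self]
  have htruth : maxInterCard {A, T} (M F i) ≤ maxInterCard {A, T} (M G i) := by
    simpa only [hback, hGi] using hM G hG i (F i) (hF i)
  refine subset_of_card_le_maxInterCard_pair hTA (le_trans ?_ htruth)
  rw [maxInterCard_pair, inter_eq_right.mpr hA]
  exact mod_cast le_max_left _ _

theorem IsApproxOn.mul_card_add_card_le {M : (Fin 2 → Finset ι → ℝ) → Fin 2 → Finset ι}
    (hM : IsApproxOn 𝒱 c M) (hfeas : IsFeasibleOn 𝒱 M) (hX : maxInterCard {X} ∈ 𝒱)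
    (hAT : maxInterCard {A, T} ∈ 𝒱) (hXT : Disjoint X T) (hAX : A ⊆ X) (hTA : #T ≤ #A) {i : Fin 2}
    (hA : A ⊆ M (Function.update (fun _ => maxInterCard {X}) i (maxInterCard {A, T})) i) :
    c * (#T + #X) ≤ #X := by
  set G := Function.update (fun _ => maxInterCard {X}) i (maxInterCard {A, T})
  have hG : ∀ l, G l ∈ 𝒱 :=
    (Function.forall_update_iff _ fun _ f => f ∈ 𝒱).mpr ⟨hAT, fun _ _ => hX⟩
  obtain ⟨j, hji⟩ := exists_ne i
  have hGi : G i = maxInterCard {A, T} := Function.update_self ..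
  have hGj : G j = maxInterCard {X} := Function.update_of_ne hji ..
  have hsum : ∀ f : Fin 2 → ℝ, ∑ l, f l = f i + f j := fun f =>
    Fintype.sum_eq_add i j hji.symm fun l hl => by lia
  have hT : maxInterCard {A, T} T = #T := by
    rw [maxInterCard_pair, inter_self, max_eq_right (card_le_card inter_subset_left)]
  have happrox := hM G hG _ (isAllocation_update_of_disjoint hXT i)
  rw [hsum, hsum, hGi, hGj, Function.update_self, Function.update_of_ne hji, hT,
    maxInterCard_singleton, maxInterCard_singleton, inter_self] at happrox
  exact happrox.trans
    (maxInterCard_pair_add_card_inter_le (hfeas G hG i j hji.symm) hA hAX hTA)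

theorem IsApproxOn.mul_le_of_isTruthfulOn {M : (Fin 2 → Finset ι → ℝ) → Fin 2 → Finset ι}
    (hM : IsApproxOn 𝒱 c M) (hfeas : IsFeasibleOn 𝒱 M) (htruth : IsTruthfulOn 𝒱 M)
    (h𝒱 : ∀ A B : Finset ι, maxInterCard {A, B} ∈ 𝒱) (hc : 0 < c) {x : ℕ} (hx : 0 < x)
    {s : Finset ι} (hs : 2 * x ≤ #s) : c * (c * x / 2 + x - 1) ≤ x := by
  obtain ⟨X, hXs, hXcard⟩ := exists_subset_card_eq (by lia : x ≤ #s)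
  have hX : maxInterCard {X} ∈ 𝒱 := by simpa only [pair_eq_singleton] using h𝒱 X X
  obtain ⟨i, hi⟩ := hM.exists_mul_card_le hX
  set A := M (fun _ => maxInterCard {X}) i ∩ X
  have hAX : A ⊆ X := inter_subset_right
  have hA_pos : 0 < #A := by
    have hcx : 0 < c * #X := by rw [hXcard]; positivity
    have h2A : (0 : ℝ) < (2 : ℕ) * #A := hcx.trans_le hi
    exact_mod_cast pos_of_mul_pos_right h2A (by positivity)
  obtain ⟨T, hTs, hTcard⟩ : ∃ T ⊆ s \ X, #T = #A - 1 := by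
    refine exists_subset_card_eq ?_
    have hAcard := card_le_card hAX
    rw [card_sdiff_of_subset hXs]
    lia
  have hXT : Disjoint X T := disjoint_sdiff.mono_right hTs
  have hA := htruth.subset_update_maxInterCard_pair (fun _ => hX) (h𝒱 A T) inter_subset_left
    (by lia : #T < #A)
  have hbound := hM.mul_card_add_card_le hfeas hX (h𝒱 A T) hXT hAX (by lia) hA
  rw [hTcard, Nat.cast_pred hA_pos, hXcard] at hbound
  rw [hXcard, Nat.cast_two] at hi
  calc c * (c * x / 2 + x - 1) ≤ c * (#A - 1 + x) := by gcongr; linarith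
    _ ≤ x := hbound

end Mechanisms

theorem pos_of_sqrt_three_sub_one_lt {c : ℝ} (hc : √3 - 1 < c) : 0 < c :=
  (sub_nonneg.mpr (Real.one_le_sqrt.mpr (by norm_num))).trans_lt hc

theorem exists_nat_lt_mul_of_sqrt_three_sub_one_lt {c : ℝ} (hc : √3 - 1 < c) :
    ∃ x : ℕ, 0 < x ∧ x < c * (c * x / 2 + x - 1) := by
  have hgap : 0 < c ^ 2 / 2 + c - 1 := by
    have hsq : 3 < (c + 1) ^ 2 := Real.lt_sq_of_sqrt_lt (by linarith)
    linarith
  have hc_pos := pos_of_sqrt_three_sub_one_lt hc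
  obtain ⟨x, hx⟩ := exists_nat_gt (c / (c ^ 2 / 2 + c - 1))
  refine ⟨x, mod_cast (div_pos hc_pos hgap).trans hx, ?_⟩
  rw [div_lt_iff₀ hgap] at hx
  linarith

theorem no_truthful_c_approx_dichotomous_XOS_general {c : ℝ} (hc : √3 - 1 < c) :
    ∃ N : ℕ, ∀ {ι : Type*} [DecidableEq ι] (s : Finset ι), N ≤ #s →
      ∀ (𝒱 : Set (Finset ι → ℝ)), (∀ A B : Finset ι, maxInterCard {A, B} ∈ 𝒱) →
        ¬ ∃ M : (Fin 2 → Finset ι → ℝ) → Fin 2 → Finset ι,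
          IsFeasibleOn 𝒱 M ∧ IsTruthfulOn 𝒱 M ∧ IsApproxOn 𝒱 c M := by
  obtain ⟨x, hx, hlt⟩ := exists_nat_lt_mul_of_sqrt_three_sub_one_lt hc
  have hc_pos := pos_of_sqrt_three_sub_one_lt hc
  refine ⟨2 * x, fun s hs 𝒱 h𝒱 => ?_⟩
  rintro ⟨M, hfeas, htruth, hM⟩
  exact (hM.mul_le_of_isTruthfulOn hfeas htruth h𝒱 hc_pos hx hs).not_gt hlt

/-- For every `c` with `√3 − 1 < c ≤ 1` there is a finite item set on which no
deterministic truthful allocation mechanism for two dichotomous XOS agents always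
achieves a `c` fraction of the maximum welfare. -/
theorem no_truthful_c_approx_dichotomous_XOS
    (c : ℝ) (hc1 : Real.sqrt 3 - 1 < c) (hc2 : c ≤ 1) :
    ∃ m : ℕ,
      ¬ ∃ Mech : (Fin 2 → Finset (Fin m) → ℝ) → (Fin 2 → Finset (Fin m)),
        -- the mechanism outputs allocations
        (∀ F : Fin 2 → Finset (Fin m) → ℝ,
          (∀ i, IsXOS (F i) ∧ IsDichotomousR (F i)) → IsAllocation (Mech F)) ∧
        -- truthfulness
        (∀ F : Fin 2 → Finset (Fin m) → ℝ,
          (∀ i, IsXOS (F i) ∧ IsDichotomousR (F i)) →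
          ∀ i : Fin 2, ∀ f' : Finset (Fin m) → ℝ, IsXOS f' ∧ IsDichotomousR f' →
            F i (Mech (Function.update F i f') i) ≤ F i (Mech F i)) ∧
        -- c-approximation of the maximum welfare
        (∀ F : Fin 2 → Finset (Fin m) → ℝ,
          (∀ i, IsXOS (F i) ∧ IsDichotomousR (F i)) →
          ∀ B : Fin 2 → Finset (Fin m), IsAllocation B →
            c * (F 0 (B 0) + F 1 (B 1)) ≤ F 0 (Mech F 0) + F 1 (Mech F 1)) := by
  obtain ⟨N, hN⟩ := no_truthful_c_approx_dichotomous_XOS_general hc1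
  refine ⟨N, ?_⟩
  simpa only [IsFeasibleOn, IsTruthfulOn, IsApproxOn, Fin.sum_univ_two, Set.mem_ofPred_eq]
    using hN univ (card_fin N).ge {f | IsXOS f ∧ IsDichotomousR f} fun A B =>
      ⟨isXOS_maxInterCard (insert_nonempty A {B}), isDichotomousR_maxInterCard {A, B}⟩
end

section
/- For every n ≥ 2 and every even integer k ≥ 2 there exist identical dichotomous XOS valuations f_1 = … = f_n for n agents on a finite item set M with |M| = (n−1)k such that some allocation A has Nash social welfare Π_i f_i(A_i) = k^n / 4, while every EF1 allocation B satisfies Π_i f_i(B_i) ≤ (k/2 + 1)^n. (Concretely, take pairwise disjoint sets S_1,…,S_{n−1} each of size k and let every agent's valuation be f(S) = max_{1≤j≤n−1} |S ∩ S_j|.) -/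
open Finset
open scoped Classical

variable {n : ℕ} {I : Type*} [DecidableEq I] [Fintype I]

/-!
The valuation is `f T = max_j #(T ∩ S j)` for `n - 1` disjoint blocks `S j` of size `k`. Giving
`n - 2` agents a whole block each and halving the remaining one between the other two agents yields
`k ^ (n - 2) * (k / 2) ^ 2`. Conversely, by pigeonhole two of the `n` agents realize their value in
the same block, so their values add up to at most `k`; as `f` is dichotomous, EF1 keeps every other
value within one of both of these, hence at most `k / 2 + 1`.
-/

section Valuations

variable {α κ : Type*}

lemma isXOS_sup'_sum [Fintype κ] [Nonempty κ] {w : κ → α → ℝ} (hw : ∀ j a, 0 ≤ w j a) :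
    IsXOS fun T : Finset α => univ.sup' univ_nonempty fun j => ∑ a ∈ T, w j a := by
  have hcard : Fintype.card κ = Fintype.card κ - 1 + 1 :=
    (Nat.sub_add_cancel Fintype.card_pos).symm
  let e : Fin (Fintype.card κ - 1 + 1) ≃ κ := (Fintype.equivFinOfCardEq hcard).symm
  refine ⟨_, fun t => w (e t), fun t => hw (e t), fun T => le_antisymm ?_ ?_⟩
  · refine sup'_le _ _ fun j _ => ?_
    simpa only [Equiv.apply_symm_apply] using
      le_sup' (fun t => ∑ a ∈ T, w (e t) a) (mem_univ (e.symm j))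
  · exact sup'_le _ _ fun t _ => le_sup' (fun j => ∑ a ∈ T, w j a) (mem_univ (e t))

lemma EF1.le_add_one [DecidableEq α] {f : Fin n → Finset α → ℝ} {B : Fin n → Finset α}
    (hB : EF1 f B) {i : Fin n} (hf : IsDichotomousR (f i)) (j : Fin n) :
    f i (B j) ≤ f i (B i) + 1 := by
  rcases hB i j with h | ⟨e, he, h⟩
  · linarith
  · have hmarginal := hf ((B j).erase e) e
    rw [insert_erase he] at hmarginal
    rcases hmarginal with h' | h' <;> linarith

lemma prod_le_of_EF1_of_add_le [DecidableEq α] {f : Finset α → ℝ} (hf : IsDichotomousR f)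
    (hf₀ : ∀ T, 0 ≤ f T) {B : Fin n → Finset α} (hB : EF1 (fun _ => f) B) {c : ℝ} {i j : Fin n}
    (hij : f (B i) + f (B j) ≤ c) :
    ∏ l, f (B l) ≤ (c / 2 + 1) ^ n := by
  have hle : ∀ l, f (B l) ≤ c / 2 + 1 := fun l => by
    linarith [hB.le_add_one (i := i) hf l, hB.le_add_one (i := j) hf l]
  calc ∏ l, f (B l) ≤ ∏ _l : Fin n, (c / 2 + 1) :=
        prod_le_prod (fun l _ => hf₀ (B l)) fun l _ => hle l
    _ = (c / 2 + 1) ^ n := by simp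

end Valuations

section MaxOverlap

variable {α κ : Type*} [DecidableEq α] [Fintype κ] (S : κ → Finset α)

/-- The valuation `T ↦ max_j #(T ∩ S j)` given by a finite family `S` of blocks of items. -/
def maxOverlap (T : Finset α) : ℕ :=
  univ.sup fun j => #(T ∩ S j)

lemma card_inter_le_maxOverlap (T : Finset α) (j : κ) : #(T ∩ S j) ≤ maxOverlap S T :=
  le_sup (f := fun j => #(T ∩ S j)) (mem_univ j)

lemma exists_maxOverlap_eq_card_inter [Nonempty κ] (T : Finset α) :
    ∃ j, maxOverlap S T = #(T ∩ S j) := by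
  obtain ⟨j, -, hj⟩ := exists_mem_eq_sup univ univ_nonempty fun j => #(T ∩ S j)
  exact ⟨j, hj⟩

lemma maxOverlap_mono : Monotone (maxOverlap S) := fun _ _ h =>
  sup_mono_fun fun _ _ => card_le_card (inter_subset_inter_right h)

lemma maxOverlap_insert_le (T : Finset α) (a : α) :
    maxOverlap S (insert a T) ≤ maxOverlap S T + 1 := by
  refine Finset.sup_le fun j _ => ?_
  calc #(insert a T ∩ S j) ≤ #(insert a (T ∩ S j)) := card_le_card (by grind)
    _ ≤ #(T ∩ S j) + 1 := card_insert_le _ _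
    _ ≤ maxOverlap S T + 1 := Nat.add_le_add_right (card_inter_le_maxOverlap S T j) 1

lemma maxOverlap_eq_card_of_subset {T : Finset α} {j : κ} (h : T ⊆ S j) :
    maxOverlap S T = #T := by
  apply le_antisymm
  · exact Finset.sup_le fun _ _ => card_le_card inter_subset_left
  · simpa only [inter_eq_left.mpr h] using card_inter_le_maxOverlap S T j

lemma isDichotomousR_maxOverlap : IsDichotomousR fun T => (maxOverlap S T : ℝ) := by
  intro T a
  have hmono := maxOverlap_mono S (subset_insert a T)
  have hinsert := maxOverlap_insert_le S T a
  have h : maxOverlap S (insert a T) = maxOverlap S T ∨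
      maxOverlap S (insert a T) = maxOverlap S T + 1 := by lia
  beta_reduce
  exact_mod_cast h

lemma isXOS_maxOverlap [Nonempty κ] : IsXOS fun T => (maxOverlap S T : ℝ) := by
  have hsup' (T : Finset α) : (maxOverlap S T : ℝ) =
      univ.sup' univ_nonempty fun j => ∑ a ∈ T, if a ∈ S j then (1 : ℝ) else 0 := by
    simp only [sum_boole, filter_mem_eq_inter, ← Nat.cast_finsetSup', sup'_eq_sup, maxOverlap]
  simp only [hsup']
  exact isXOS_sup'_sum fun j a => by positivity

lemma exists_ne_maxOverlap_add_le [Nonempty κ] {k : ℕ} (hS : ∀ j, #(S j) ≤ k)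
    (hκ : Fintype.card κ < n) {B : Fin n → Finset α} (hB : IsAllocation B) :
    ∃ i j, i ≠ j ∧ maxOverlap S (B i) + maxOverlap S (B j) ≤ k := by
  choose c hc using fun i => exists_maxOverlap_eq_card_inter S (B i)
  obtain ⟨i, j, hij, hcij⟩ := Fintype.exists_ne_map_eq_of_card_lt c (by simpa using hκ)
  have hdisj : Disjoint (B i ∩ S (c i)) (B j ∩ S (c i)) :=
    (hB i j hij).mono inter_subset_left inter_subset_left
  refine ⟨i, j, hij, ?_⟩
  calc maxOverlap S (B i) + maxOverlap S (B j)
      = #((B i ∩ S (c i)) ∪ (B j ∩ S (c i))) := by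
        rw [card_union_of_disjoint hdisj, hc i, hc j, hcij]
    _ ≤ #(S (c i)) := card_le_card (union_subset inter_subset_right inter_subset_right)
    _ ≤ k := hS (c i)

lemma prod_maxOverlap_le_of_EF1 [Nonempty κ] {k : ℕ} (hS : ∀ j, #(S j) ≤ k)
    (hκ : Fintype.card κ < n) {B : Fin n → Finset α} (hB : IsAllocation B)
    (hEF1 : EF1 (fun _ T => (maxOverlap S T : ℝ)) B) :
    ∏ i, (maxOverlap S (B i) : ℝ) ≤ ((k : ℝ) / 2 + 1) ^ n := by
  obtain ⟨i, j, -, hij⟩ := exists_ne_maxOverlap_add_le S hS hκ hB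
  exact prod_le_of_EF1_of_add_le (i := i) (j := j) (isDichotomousR_maxOverlap S)
    (fun _ => Nat.cast_nonneg _) hEF1 (by exact_mod_cast hij)

end MaxOverlap

section CutAllocation

variable {α : Type*} [DecidableEq α] {m : ℕ} {S : Fin m → Finset α} {T : Finset α}

/-- The allocation that hands each block `S j` to its own agent, except for the items of `T`,
which go to one additional agent. The additional agent is the last one. -/
def cutAllocation (S : Fin m → Finset α) (T : Finset α) : Fin (m + 1) → Finset α :=
  Fin.snoc (α := fun _ => Finset α) (fun j => S j \ T) T

@[simp]
lemma cutAllocation_castSucc (j : Fin m) : cutAllocation S T j.castSucc = S j \ T :=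
  Fin.snoc_castSucc (α := fun _ => Finset α) _ _ _

@[simp]
lemma cutAllocation_last : cutAllocation S T (Fin.last m) = T :=
  Fin.snoc_last (α := fun _ => Finset α) _ _

lemma isAllocation_cutAllocation (hS : Pairwise fun i j => Disjoint (S i) (S j)) :
    IsAllocation (cutAllocation S T) := by
  intro i j hij
  induction i using Fin.lastCases with
  | last =>
    induction j using Fin.lastCases with
    | last => exact absurd rfl hij
    | cast j => simpa using disjoint_sdiff
  | cast i =>
    induction j using Fin.lastCases with
    | last => simpa using sdiff_disjoint
    | cast j =>
      simpa using (hS (ne_of_apply_ne Fin.castSucc hij)).mono sdiff_subset sdiff_subset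

lemma prod_maxOverlap_cutAllocation (hS : Pairwise fun i j => Disjoint (S i) (S j))
    {j₀ : Fin m} (hT : T ⊆ S j₀) :
    ∏ i, maxOverlap S (cutAllocation S T i) =
      #(S j₀ \ T) * (∏ j ∈ univ.erase j₀, #(S j)) * #T := by
  have hvalue (j : Fin m) : maxOverlap S (S j \ T) = #(S j \ T) :=
    maxOverlap_eq_card_of_subset S sdiff_subset
  have huncut : ∀ j ∈ univ.erase j₀, S j \ T = S j := fun j hj =>
    sdiff_eq_self_of_disjoint ((hS (ne_of_mem_erase hj)).mono_right hT)
  simp only [Fin.prod_univ_castSucc, cutAllocation_castSucc, cutAllocation_last, hvalue,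
    maxOverlap_eq_card_of_subset S hT]
  rw [← mul_prod_erase univ _ (mem_univ j₀),
    prod_congr rfl fun j hj => congrArg card (huncut j hj)]

lemma exists_isAllocation_prod_maxOverlap_eq {S : Fin (m + 1) → Finset α}
    (hS : Pairwise fun i j => Disjoint (S i) (S j)) {k : ℕ} (hk : Even k)
    (hcard : ∀ j, #(S j) = k) :
    ∃ A : Fin (m + 2) → Finset α, IsAllocation A ∧
      ∏ i, (maxOverlap S (A i) : ℝ) = (k : ℝ) ^ (m + 2) / 4 := by
  obtain ⟨c, rfl⟩ := hk
  obtain ⟨T, hT, hTc⟩ := exists_subset_card_eq (s := S 0) (n := c) (by rw [hcard]; lia)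
  have hrest : #(S 0 \ T) = c := by rw [card_sdiff_of_subset hT, hcard, hTc, Nat.add_sub_cancel]
  refine ⟨cutAllocation S T, isAllocation_cutAllocation hS, ?_⟩
  rw [← Nat.cast_prod, prod_maxOverlap_cutAllocation hS hT, hrest, hTc]
  simp only [hcard, prod_const, card_erase_of_mem (mem_univ _), card_univ, Fintype.card_fin]
  push_cast
  ring

end CutAllocation

lemma exists_pairwise_disjoint_card_eq {α κ : Type*} [Fintype α] [Fintype κ] {k : ℕ}
    (h : Fintype.card κ * k ≤ Fintype.card α) :
    ∃ S : κ → Finset α, (Pairwise fun i j => Disjoint (S i) (S j)) ∧ ∀ j, #(S j) = k := by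
  obtain ⟨e⟩ : Nonempty (κ × Fin k ↪ α) := Function.Embedding.nonempty_of_card_le (by simpa using h)
  refine ⟨fun j => univ.map ((Function.Embedding.sectR j (Fin k)).trans e), fun i j hij => ?_,
    fun j => by simp⟩
  simp only [disjoint_left, mem_map]
  rintro _ ⟨a, -, rfl⟩ ⟨b, -, hab⟩
  exact hij (congrArg Prod.fst (e.injective hab)).symm

/-- For every `n ≥ 2` and even `k ≥ 2` there is a single dichotomous XOS valuation,
shared by all `n` agents, on `(n−1)k` items, such that some allocation has Nash social
welfare `k^n/4` while every EF1 allocation has Nash social welfare at most `(k/2+1)^n`. -/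
theorem NSW_gap_EF1_dichotomous_XOS (n k : ℕ) (hn : 2 ≤ n) (hk : 2 ≤ k) (hke : Even k) :
    ∃ f : Finset (Fin ((n - 1) * k)) → ℝ,
      (IsXOS f ∧ IsDichotomousR f) ∧
      (∃ A : Fin n → Finset (Fin ((n - 1) * k)), IsAllocation A ∧
        ∏ i, f (A i) = (k : ℝ) ^ n / 4) ∧
      (∀ B : Fin n → Finset (Fin ((n - 1) * k)), IsAllocation B →
        EF1 (fun _ => f) B → ∏ i, f (B i) ≤ ((k : ℝ) / 2 + 1) ^ n) := by
  obtain ⟨m, rfl⟩ : ∃ m, n = m + 2 := ⟨n - 2, by lia⟩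
  obtain ⟨S, hS, hcard⟩ := exists_pairwise_disjoint_card_eq
    (α := Fin ((m + 1) * k)) (κ := Fin (m + 1)) (k := k) (by simp)
  exact ⟨fun T => maxOverlap S T,
    ⟨isXOS_maxOverlap S, isDichotomousR_maxOverlap S⟩,
    exists_isAllocation_prod_maxOverlap_eq hS hke hcard,
    fun _ => prod_maxOverlap_le_of_EF1 S (fun j => (hcard j).le) (by simp)⟩
end
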